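/- arXiv:2206.12067 — 2 statements merged into one kernel-verified Lean document; each statement's English description precedes it below -/
import Mathlib

section
/- Let B ⊂ ℝ^d be an open Euclidean ball and G the semilinear operator defined in the context. Suppose λ_B ∈ ℝ and ψ ∈ C²(B) ∩ C(B̄) satisfy ψ > 0 in B, ψ = 0 on ∂B and Gψ = λ_B ψ in B. Then λ_B equals the generalized principal eigenvalue of G on B, namely λ_B = inf{ λ ∈ ℝ : there exists φ ∈ C²(B) ∩ C(B̄) with φ > 0 in B and Gφ ≤ λφ in B }. (Identification part of Theorem 3.1, classical-solution rendering.) -/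
open Metric Set MeasureTheory

noncomputable def sdv {d : ℕ} (φ : EuclideanSpace ℝ (Fin d) → ℝ)
    (x : EuclideanSpace ℝ (Fin d)) (i j : Fin d) : ℝ :=
  fderiv ℝ (fun y => fderiv ℝ φ y (EuclideanSpace.single j 1)) x (EuclideanSpace.single i 1)

/-- The semilinear operator
`Gφ(x) = Σ_{i,j} a_{ij}(x) ∂²φ/∂x_i∂x_j(x) + inf_{u∈U} (b(x,u)·∇φ(x) + r(x,u) φ(x))`. -/
noncomputable def Gop {d : ℕ} {U : Type*}
    (a : EuclideanSpace ℝ (Fin d) → Matrix (Fin d) (Fin d) ℝ)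
    (b : EuclideanSpace ℝ (Fin d) → U → EuclideanSpace ℝ (Fin d))
    (r : EuclideanSpace ℝ (Fin d) → U → ℝ)
    (φ : EuclideanSpace ℝ (Fin d) → ℝ) (x : EuclideanSpace ℝ (Fin d)) : ℝ :=
  (∑ i, ∑ j, a x i j * sdv φ x i j)
    + ⨅ u : U, ((inner ℝ (b x u) (gradient φ x) : ℝ) + r x u * φ x)

/-- The quadratic form `zᵀ A z`. -/
noncomputable def quadForm {d : ℕ}
    (A : Matrix (Fin d) (Fin d) ℝ) (z : EuclideanSpace ℝ (Fin d)) : ℝ :=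
  ∑ i, ∑ j, z i * A i j * z j

theorem aux_sdt {E : Type*} [NormedAddCommGroup E] [NormedSpace ℝ E] (v : E → ℝ) (x : E)
    (hv : ContDiffAt ℝ 2 v x) (hm : IsLocalMax v x) (m : E) :
    fderiv ℝ (fderiv ℝ v) x m m ≤ 0 := by
  by_contra hcon
  push Not at hcon
  have hline : ∀ τ : ℝ, HasDerivAt (fun τ : ℝ => x + τ • m) m τ := by
    intro τ
    simpa using ((hasDerivAt_id τ).smul_const m).const_add x
  have hcl : Continuous (fun τ : ℝ => x + τ • m) := by fun_prop
  have ht : Filter.Tendsto (fun τ : ℝ => x + τ • m) (nhds 0) (nhds x) := by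
    have := hcl.tendsto 0
    simpa using this
  have hdiff : ∀ᶠ y in nhds x, DifferentiableAt ℝ v y := by
    have := hv.eventually (by simp)
    filter_upwards [this] with y hy
    exact hy.differentiableAt (by norm_num)
  have hd1 : ∀ᶠ τ in nhds (0:ℝ), deriv (fun τ : ℝ => v (x + τ • m)) τ
      = fderiv ℝ v (x + τ • m) m := by
    filter_upwards [ht.eventually hdiff] with τ hτ
    exact (hτ.hasFDerivAt.comp_hasDerivAt τ (hline τ)).deriv
  have hf2 : DifferentiableAt ℝ (fderiv ℝ v) x :=
    (hv.fderiv_right (m := 1) (by norm_num)).differentiableAt (by norm_num)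
  have hd2 : deriv (deriv (fun τ : ℝ => v (x + τ • m))) 0 = fderiv ℝ (fderiv ℝ v) x m m := by
    rw [Filter.EventuallyEq.deriv_eq hd1]
    have h0 : HasFDerivAt (fderiv ℝ v) (fderiv ℝ (fderiv ℝ v) x) (x + (0:ℝ) • m) := by
      simpa using hf2.hasFDerivAt
    have h1 := h0.comp_hasDerivAt (0:ℝ) (hline 0)
    have h2 := h1.clm_apply (hasDerivAt_const (0:ℝ) m)
    simpa using h2.deriv
  have hmax : IsLocalMax (fun τ : ℝ => v (x + τ • m)) 0 := by
    have := ht.eventually hm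
    filter_upwards [this] with τ hτ
    simpa using hτ
  have hmin : IsLocalMin (fun τ : ℝ => v (x + τ • m)) 0 := by
    apply isLocalMin_of_deriv_deriv_pos
    · rw [hd2]; exact hcon
    · exact hmax.deriv_eq_zero
    · have : ContinuousAt v (x + (0:ℝ) • m) := by simpa using hv.continuousAt
      exact ContinuousAt.comp (f := fun τ : ℝ => x + τ • m) this hcl.continuousAt
  have hconst : (fun τ : ℝ => v (x + τ • m)) =ᶠ[nhds 0] fun _ => v (x + (0:ℝ) • m) := by
    filter_upwards [hmax, hmin] with τ h1 h2
    exact le_antisymm h1 h2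
  have h3 := hconst.deriv.deriv_eq
  rw [hd2] at h3
  simp at h3
  linarith

theorem aux_sdv {d : ℕ} (v : EuclideanSpace ℝ (Fin d) → ℝ) (x : EuclideanSpace ℝ (Fin d))
    (hv : ContDiffAt ℝ 2 v x) (i j : Fin d) :
    sdv v x i j = fderiv ℝ (fderiv ℝ v) x (EuclideanSpace.single i 1)
      (EuclideanSpace.single j 1) := by
  have hf2 : DifferentiableAt ℝ (fderiv ℝ v) x :=
    (hv.fderiv_right (m := 1) (by norm_num)).differentiableAt (by norm_num)
  unfold sdv
  rw [fderiv_clm_apply hf2 (differentiableAt_const _)]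
  simp

theorem aux_trace {d : ℕ} (A : Matrix (Fin d) (Fin d) ℝ) (hs : A.IsSymm)
    (hq : ∀ z, 0 ≤ quadForm A z)
    (H : EuclideanSpace ℝ (Fin d) →L[ℝ] EuclideanSpace ℝ (Fin d) →L[ℝ] ℝ)
    (hH : ∀ m, H m m ≤ 0) :
    ∑ i, ∑ j, A i j * H (EuclideanSpace.single i 1) (EuclideanSpace.single j 1) ≤ 0 := by
  have hp : A.PosSemidef := by
    apply Matrix.PosSemidef.of_dotProduct_mulVec_nonneg
    · exact hs
    · intro z
      have := hq (WithLp.toLp 2 z)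
      simpa [quadForm, dotProduct, Matrix.mulVec, Finset.mul_sum, mul_assoc] using this
  obtain ⟨n, B, hB⟩ := Matrix.posSemidef_iff_eq_sum_vecMulVec.mp hp
  have hA : ∀ i j, A i j = ∑ k, B k i * B k j := by
    intro i j
    rw [hB, Matrix.sum_apply]
    simp [Matrix.vecMulVec_apply]
  have key : ∑ i, ∑ j, A i j *
      H (EuclideanSpace.single i 1) (EuclideanSpace.single j 1)
      = ∑ k, H (∑ i, B k i • EuclideanSpace.single i 1)
          (∑ j, B k j • EuclideanSpace.single j 1) := by
    have : ∀ k, H (∑ i, B k i • EuclideanSpace.single i 1)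
          (∑ j, B k j • EuclideanSpace.single j 1) = ∑ i, ∑ j, (B k i * B k j) *
          H (EuclideanSpace.single i 1) (EuclideanSpace.single j 1) := by
      intro k
      rw [map_sum H, sum_apply]
      refine Finset.sum_congr rfl fun i _ => ?_
      rw [map_sum]
      refine Finset.sum_congr rfl fun j _ => ?_
      simp [mul_assoc, mul_left_comm]
    simp only [this, hA, Finset.sum_mul]
    rw [Finset.sum_comm' (t' := Finset.univ) (s' := fun _ => Finset.univ) (by simp)]
    conv_lhs => enter [2, i]; rw [Finset.sum_comm]
    rw [Finset.sum_comm]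
    refine Finset.sum_congr rfl fun k _ => ?_
    rw [Finset.sum_comm]
  rw [key]
  exact Finset.sum_nonpos fun k _ => hH _

theorem aux_grad {d : ℕ} (v : EuclideanSpace ℝ (Fin d) → ℝ) (x y : EuclideanSpace ℝ (Fin d)) :
    (inner ℝ y (gradient v x) : ℝ) = fderiv ℝ v x y := by
  rw [real_inner_comm, gradient, InnerProductSpace.toDual_symm_apply]

theorem aux_comb {E : Type*} [NormedAddCommGroup E] [NormedSpace ℝ E] (f g h : E → ℝ) (x : E)
    (hf : ContDiffAt ℝ 2 f x) (hg : ContDiffAt ℝ 2 g x) (hh : ContDiffAt ℝ 2 h x) (t s : ℝ) :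
    fderiv ℝ (fun y => f y - t * g y - s * h y) x
      = fderiv ℝ f x - t • fderiv ℝ g x - s • fderiv ℝ h x ∧
    fderiv ℝ (fderiv ℝ (fun y => f y - t * g y - s * h y)) x
      = fderiv ℝ (fderiv ℝ f) x - t • fderiv ℝ (fderiv ℝ g) x - s • fderiv ℝ (fderiv ℝ h) x := by
  have ev : ∀ f : E → ℝ, ContDiffAt ℝ 2 f x → ∀ᶠ y in nhds x, DifferentiableAt ℝ f y := by
    intro f hf
    filter_upwards [hf.eventually (by simp)] with y hy
    exact hy.differentiableAt (by norm_num)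
  have e1 : fderiv ℝ (fun y => f y - t * g y - s * h y) =ᶠ[nhds x]
      fun y => fderiv ℝ f y - t • fderiv ℝ g y - s • fderiv ℝ h y := by
    filter_upwards [ev f hf, ev g hg, ev h hh] with y h1 h2 h3
    exact ((h1.hasFDerivAt.sub (h2.hasFDerivAt.const_mul t)).sub
      (h3.hasFDerivAt.const_mul s)).fderiv
  have d2 : ∀ f : E → ℝ, ContDiffAt ℝ 2 f x → DifferentiableAt ℝ (fderiv ℝ f) x := fun f hv =>
    (hv.fderiv_right (m := 1) (by norm_num)).differentiableAt (by norm_num)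
  refine ⟨e1.eq_of_nhds, ?_⟩
  rw [e1.fderiv_eq]
  exact (((d2 f hf).hasFDerivAt.sub ((d2 g hg).hasFDerivAt.const_smul t)).sub
      ((d2 h hh).hasFDerivAt.const_smul s)).fderiv

noncomputable def barr {d : ℕ} (c : EuclideanSpace ℝ (Fin d)) (R k : ℝ)
    (y : EuclideanSpace ℝ (Fin d)) : ℝ :=
  1 + k * (R ^ 2 - ‖y - c‖ ^ 2) - k ^ 2 * (R ^ 2 - ‖y - c‖ ^ 2) ^ 2

theorem barr_contDiff {d : ℕ} (c : EuclideanSpace ℝ (Fin d)) (R k : ℝ) :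
    ContDiff ℝ 2 (barr c R k) := by
  have : ContDiff ℝ 2 (fun y : EuclideanSpace ℝ (Fin d) => ‖y - c‖ ^ 2) :=
    (contDiff_id.sub contDiff_const).norm_sq ℝ
  unfold barr
  fun_prop

theorem nsq_hasFDerivAt {d : ℕ} (c : EuclideanSpace ℝ (Fin d)) (y : EuclideanSpace ℝ (Fin d)) :
    HasFDerivAt (fun y : EuclideanSpace ℝ (Fin d) => ‖y - c‖ ^ 2)
      ((2 : ℝ) • innerSL ℝ (y - c)) y := by
  have := ((hasFDerivAt_id y).sub_const c).norm_sq
  have e : ((2 : ℝ) • innerSL ℝ (y - c) : EuclideanSpace ℝ (Fin d) →L[ℝ] ℝ)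
      = 2 • (innerSL ℝ (id y - c)).comp (ContinuousLinearMap.id ℝ _) := by
    ext v
    simp [two_smul, two_mul]
  rw [e]
  exact this

theorem barr_fderiv {d : ℕ} (c : EuclideanSpace ℝ (Fin d)) (R k : ℝ)
    (y v : EuclideanSpace ℝ (Fin d)) :
    fderiv ℝ (barr c R k) y v
      = (-2 * (k - 2 * k ^ 2 * (R ^ 2 - ‖y - c‖ ^ 2))) * inner ℝ (y - c) v := by
  have h1 := (nsq_hasFDerivAt c y).const_sub (R ^ 2)
  have h2 := ((h1.const_mul k).const_add 1).sub ((h1.pow 2).const_mul (k ^ 2))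
  have h3 : fderiv ℝ (barr c R k) y = _ := h2.fderiv
  rw [h3]
  simp only [sub_apply, neg_apply, smul_apply,
    innerSL_apply_apply, smul_eq_mul, nsmul_eq_mul]
  push_cast
  ring

theorem barr_sdv {d : ℕ} (c : EuclideanSpace ℝ (Fin d)) (R k : ℝ)
    (x : EuclideanSpace ℝ (Fin d)) (i j : Fin d) :
    sdv (barr c R k) x i j
      = -8 * k ^ 2 * ((x - c) i * (x - c) j)
        - 2 * (k - 2 * k ^ 2 * (R ^ 2 - ‖x - c‖ ^ 2)) * (if i = j then 1 else 0) := by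
  unfold sdv
  have : (fun y => fderiv ℝ (barr c R k) y (EuclideanSpace.single j 1)) = fun y =>
      (-2 * (k - 2 * k ^ 2 * (R ^ 2 - ‖y - c‖ ^ 2))) *
        inner ℝ (y - c) (EuclideanSpace.single j 1) := by
    funext y
    exact barr_fderiv c R k y _
  rw [this]
  have h1 := (nsq_hasFDerivAt c x).const_sub (R ^ 2)
  have h2 := ((h1.const_mul (2 * k ^ 2)).const_sub k).const_mul (-2)
  have h3 := ((hasFDerivAt_id x).sub_const c).inner ℝ
    (hasFDerivAt_const (EuclideanSpace.single j (1:ℝ)) x)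
  have h4 := (h2.mul h3).fderiv
  simp only [id] at h4
  erw [h4]
  simp [fderivInnerCLM_apply, EuclideanSpace.inner_single_left, EuclideanSpace.inner_single_right]
  by_cases hij : i = j
  · subst hij
    simp
    ring
  · simp [hij, Ne.symm hij]
    ring

theorem barr_ineq {d : ℕ} {U : Type*} 
    (c : EuclideanSpace ℝ (Fin d)) (R : ℝ) (hR : 0 < R)
    (a : EuclideanSpace ℝ (Fin d) → Matrix (Fin d) (Fin d) ℝ)
    (b : EuclideanSpace ℝ (Fin d) → U → EuclideanSpace ℝ (Fin d))
    (r : EuclideanSpace ℝ (Fin d) → U → ℝ)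
    (C : ℝ) (hC : 1 ≤ C) (hell : ∀ x ∈ closedBall c R, ∀ z : EuclideanSpace ℝ (Fin d),
      C⁻¹ * ‖z‖ ^ 2 ≤ quadForm (a x) z)
    (Mb Mr : ℝ) (hMb0 : 0 ≤ Mb) (hMr0 : 0 ≤ Mr)
    (hMb : ∀ x ∈ closedBall c R, ∀ u, ‖b x u‖ ≤ Mb)
    (hMr : ∀ x ∈ closedBall c R, ∀ u, r x u ≤ Mr) :
    ∃ δ k : ℝ, 0 < δ ∧ δ < R ^ 2 ∧ ∀ x ∈ closedBall c R, R ^ 2 - ‖x - c‖ ^ 2 ≤ δ →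
      0 < barr c R k x ∧ ∀ u, (∑ i, ∑ j, a x i j * sdv (barr c R k) x i j)
        + fderiv ℝ (barr c R k) x (b x u) + r x u * barr c R k x ≤ 0 := by
  set k : ℝ := 1 + 1 / R ^ 2 + C * (2 * R * Mb + 2 * Mr) / (4 * R ^ 2) with hk
  have hC0 : 0 < C := by linarith
  have hA : 0 ≤ C * (2 * R * Mb + 2 * Mr) / (4 * R ^ 2) := by positivity
  have hB : 0 < 1 / R ^ 2 := by positivity
  have hk1 : 1 ≤ k := by linarith
  have hk2 : 1 ≤ k * R ^ 2 := by
    have : 1 / R ^ 2 ≤ k := by linarith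
    rwa [div_le_iff₀ (by positivity)] at this
  have hk3 : 2 * R * Mb + 2 * Mr ≤ 4 * k * R ^ 2 * C⁻¹ := by
    have : C * (2 * R * Mb + 2 * Mr) / (4 * R ^ 2) ≤ k := by linarith
    rw [div_le_iff₀ (by positivity)] at this
    rw [← div_eq_mul_inv, le_div_iff₀ hC0]
    linarith
  have hk0 : 0 < k := by linarith
  refine ⟨1 / (2 * k), k, by positivity, ?_, ?_⟩
  · rw [div_lt_iff₀ (by positivity)]; linarith
  intro x hx hs
  have hn : ‖x - c‖ ≤ R := by simpa [dist_eq_norm] using hx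
  have hs0 : 0 ≤ R ^ 2 - ‖x - c‖ ^ 2 := by
    have := norm_nonneg (x - c)
    nlinarith
  have hρ : R ^ 2 / 2 ≤ ‖x - c‖ ^ 2 := by
    have : 1 / (2 * k) ≤ R ^ 2 / 2 := by
      rw [div_le_iff₀ (by positivity)]; linarith
    linarith
  set s := R ^ 2 - ‖x - c‖ ^ 2 with hsdef
  have hp : k * s ≤ 1 / 2 := by
    rw [le_div_iff₀ (by positivity)] at hs; linarith
  have hp0 : 0 ≤ k * s := by positivity
  have hb : barr c R k x = 1 + k * s - (k * s) ^ 2 := by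
    rw [barr, ← hsdef]; ring
  have hb1 : 0 < barr c R k x := by rw [hb]; nlinarith
  have hb2 : barr c R k x ≤ 2 := by rw [hb]; nlinarith
  refine ⟨hb1, fun u => ?_⟩
  have hsum : (∑ i, ∑ j, a x i j * sdv (barr c R k) x i j)
      = -8 * k ^ 2 * quadForm (a x) (x - c) - 2 * (k - 2 * k ^ 2 * s) * ∑ i, a x i i := by
    simp only [barr_sdv, ← hsdef, quadForm, Finset.mul_sum, ← Finset.sum_sub_distrib]
    refine Finset.sum_congr rfl fun i _ => ?_
    simp only [mul_sub, Finset.sum_sub_distrib]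
    congr 1
    · exact Finset.sum_congr rfl fun j _ => by ring
    · simp
      ring
  have htr : 0 ≤ ∑ i, a x i i := by
    refine Finset.sum_nonneg fun i _ => ?_
    have h1 := hell x hx (EuclideanSpace.single i 1)
    have h2 : quadForm (a x) (EuclideanSpace.single i 1) = a x i i := by
      simp [quadForm]
    rw [h2] at h1
    refine le_trans ?_ h1
    positivity
  have hq := hell x hx (x - c)
  have hc0 : 0 ≤ k - 2 * k ^ 2 * s := by nlinarith
  have hc1 : k - 2 * k ^ 2 * s ≤ k := by nlinarith
  have hin : -(R * Mb) ≤ inner ℝ (x - c) (b x u) := by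
    have h1 := neg_le_of_abs_le (abs_real_inner_le_norm (x - c) (b x u))
    have h2 : ‖x - c‖ * ‖b x u‖ ≤ R * Mb := by
      gcongr
      exact hMb x hx u
    linarith
  have t1 : -8 * k ^ 2 * quadForm (a x) (x - c) ≤ -4 * k ^ 2 * (C⁻¹ * R ^ 2) := by
    have : C⁻¹ * (R ^ 2 / 2) ≤ quadForm (a x) (x - c) := le_trans (by gcongr) hq
    have q := mul_le_mul_of_nonneg_left this (sq_nonneg k)
    linarith
  have t2 : 0 ≤ 2 * (k - 2 * k ^ 2 * s) * ∑ i, a x i i := by positivity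
  have t3 : fderiv ℝ (barr c R k) x (b x u) ≤ 2 * k * (R * Mb) := by
    rw [barr_fderiv, ← hsdef]
    have hRM : 0 ≤ R * Mb := by positivity
    have q1 := mul_le_mul_of_nonneg_left hin hc0
    have q2 := mul_le_mul_of_nonneg_right hc1 hRM
    linarith
  have t4 : r x u * barr c R k x ≤ 2 * Mr := by
    have q1 := mul_le_mul_of_nonneg_right (hMr x hx u) hb1.le
    have q2 := mul_le_mul_of_nonneg_left hb2 hMr0
    linarith
  have t5 := mul_le_mul_of_nonneg_left hk3 hk0.le
  have t6 := mul_le_mul_of_nonneg_right hk1 hMr0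
  rw [hsum]
  linarith

theorem aux_point {d : ℕ} {U : Type*} [MetricSpace U] [CompactSpace U] [Nonempty U]
    (a : EuclideanSpace ℝ (Fin d) → Matrix (Fin d) (Fin d) ℝ)
    (b : EuclideanSpace ℝ (Fin d) → U → EuclideanSpace ℝ (Fin d))
    (r : EuclideanSpace ℝ (Fin d) → U → ℝ)
    (x : EuclideanSpace ℝ (Fin d)) (hs : (a x).IsSymm) (hq : ∀ z, 0 ≤ quadForm (a x) z)
    (hbc : Continuous (b x)) (hrc : Continuous (r x))
    (ψ φ h : EuclideanSpace ℝ (Fin d) → ℝ)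
    (hψ : ContDiffAt ℝ 2 ψ x) (hφ : ContDiffAt ℝ 2 φ x) (hh : ContDiffAt ℝ 2 h x)
    (t s : ℝ) (ht : 0 ≤ t)
    (hm : IsLocalMax (fun y => ψ y - t * φ y - s * h y) x)
    (h0 : ψ x - t * φ x - s * h x = 0)
    (lamB lam : ℝ) (hlt : lam < lamB) (hpos : 0 < ψ x)
    (e1 : Gop a b r ψ x = lamB * ψ x) (e2 : Gop a b r φ x ≤ lam * φ x)
    (hL : ∀ u, s * ((∑ i, ∑ j, a x i j * sdv h x i j)
        + fderiv ℝ h x (b x u) + (r x u - lam) * h x) ≤ 0) : False := by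
  have hcont : ∀ f : EuclideanSpace ℝ (Fin d) → ℝ, Continuous
      (fun u => (inner ℝ (b x u) (gradient f x) : ℝ) + r x u * f x) := by
    intro f
    fun_prop
  obtain ⟨u, -, hu⟩ := isCompact_univ.exists_isMinOn (univ_nonempty (α := U))
    (hcont φ).continuousOn
  have g2 : (∑ i, ∑ j, a x i j * sdv φ x i j)
      + ((inner ℝ (b x u) (gradient φ x) : ℝ) + r x u * φ x) ≤ Gop a b r φ x := by
    unfold Gop
    gcongr
    exact le_ciInf fun w => hu (mem_univ w)
  have g1 : Gop a b r ψ x ≤ (∑ i, ∑ j, a x i j * sdv ψ x i j)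
      + ((inner ℝ (b x u) (gradient ψ x) : ℝ) + r x u * ψ x) := by
    unfold Gop
    gcongr
    exact ciInf_le (isCompact_range (hcont ψ)).bddBelow u
  obtain ⟨f1, f2⟩ := aux_comb ψ φ h x hψ hφ hh t s
  have hvr : ContDiffAt ℝ 2 (fun y => ψ y - t * φ y - s * h y) x := by fun_prop
  have hgr := hm.fderiv_eq_zero
  rw [f1] at hgr
  have hgr' := congrArg (fun T => T (b x u)) hgr
  simp at hgr'
  have htr := aux_trace (a x) hs hq _ (fun m => aux_sdt _ x hvr hm m)
  rw [f2] at htr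
  have htr' : (∑ i, ∑ j, a x i j * sdv ψ x i j) - t * (∑ i, ∑ j, a x i j * sdv φ x i j)
      - s * (∑ i, ∑ j, a x i j * sdv h x i j) ≤ 0 := by
    refine le_trans (le_of_eq ?_) htr
    simp only [aux_sdv _ x hψ, aux_sdv _ x hφ, aux_sdv _ x hh, Finset.mul_sum,
      ← Finset.sum_sub_distrib]
    refine Finset.sum_congr rfl fun i _ => Finset.sum_congr rfl fun j _ => ?_
    simp
    ring
  rw [aux_grad] at g1 g2
  have hu2 := hL u
  have g3 := mul_le_mul_of_nonneg_left (g2.trans e2) ht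
  rw [e1] at g1
  have hp := mul_pos (sub_pos.2 hlt) hpos
  have e3 : ψ x = t * φ x + s * h x := by linarith
  have e4 : r x u * ψ x = r x u * (t * φ x) + r x u * (s * h x) := by rw [e3]; ring
  have e5 : lam * ψ x = lam * (t * φ x) + lam * (s * h x) := by rw [e3]; ring
  nlinarith

theorem aux_main
    {d : ℕ} {U : Type*} [MetricSpace U] [CompactSpace U] [Nonempty U]
    (c : EuclideanSpace ℝ (Fin d)) (R : ℝ) (hR : 0 < R)
    (a : EuclideanSpace ℝ (Fin d) → Matrix (Fin d) (Fin d) ℝ)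
    (b : EuclideanSpace ℝ (Fin d) → U → EuclideanSpace ℝ (Fin d))
    (r : EuclideanSpace ℝ (Fin d) → U → ℝ)
    (ha_symm : ∀ x ∈ closedBall c R, (a x).IsSymm)
    (ha_ell : ∃ C : ℝ, 1 ≤ C ∧ ∀ x ∈ closedBall c R, ∀ z : EuclideanSpace ℝ (Fin d),
      C⁻¹ * ‖z‖ ^ 2 ≤ quadForm (a x) z ∧ quadForm (a x) z ≤ C * ‖z‖ ^ 2)
    (hb_cont : ContinuousOn (fun p : EuclideanSpace ℝ (Fin d) × U => b p.1 p.2)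
      (closedBall c R ×ˢ univ))
    (hr_cont : ContinuousOn (fun p : EuclideanSpace ℝ (Fin d) × U => r p.1 p.2)
      (closedBall c R ×ˢ univ))
    (lamB : ℝ) (ψ : EuclideanSpace ℝ (Fin d) → ℝ)
    (hψ_reg : ContDiffOn ℝ 2 ψ (ball c R)) (hψ_cont : ContinuousOn ψ (closedBall c R))
    (hψ_pos : ∀ x ∈ ball c R, 0 < ψ x) (hψ_bd : ∀ x ∈ sphere c R, ψ x = 0)
    (hψ_eq : ∀ x ∈ ball c R, Gop a b r ψ x = lamB * ψ x)
    (lam : ℝ) (φ : EuclideanSpace ℝ (Fin d) → ℝ)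
    (hφ_reg : ContDiffOn ℝ 2 φ (ball c R)) (hφ_cont : ContinuousOn φ (closedBall c R))
    (hφ_pos : ∀ x ∈ ball c R, 0 < φ x)
    (hφ_le : ∀ x ∈ ball c R, Gop a b r φ x ≤ lam * φ x) : lamB ≤ lam := by
  by_contra hcon
  push Not at hcon
  obtain ⟨C, hC, hell⟩ := ha_ell
  have hC0 : 0 < C := by linarith
  have hcomp : IsCompact (closedBall c R ×ˢ (univ : Set U)) :=
    (isCompact_closedBall c R).prod isCompact_univ
  obtain ⟨Mb, hMb⟩ := hcomp.exists_bound_of_continuousOn hb_cont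
  obtain ⟨Mr, hMr⟩ := hcomp.exists_bound_of_continuousOn hr_cont
  obtain ⟨δ, k, hδ0, hδR, hbar⟩ := barr_ineq c R hR a b (fun x u => r x u - lam) C hC
    (fun x hx z => (hell x hx z).1) |Mb| (|Mr| + |lam|) (abs_nonneg _) (by positivity)
    (fun x hx u => (hMb (x, u) ⟨hx, mem_univ _⟩).trans (le_abs_self _))
    (fun x hx u => by
      have h1 := hMr (x, u) ⟨hx, mem_univ _⟩
      have h2 := le_abs_self (r x u)
      have h3 := le_abs_self Mr
      have h4 := neg_abs_le lam
      simp only [Real.norm_eq_abs] at h1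
      linarith)
  have bsub : ball c R ⊆ closedBall c R := ball_subset_closedBall
  have point : ∀ x ∈ ball c R, ∀ t s : ℝ, 0 ≤ t →
      IsLocalMax (fun y => ψ y - t * φ y - s * barr c R k y) x →
      ψ x - t * φ x - s * barr c R k x = 0 →
      (∀ u, s * ((∑ i, ∑ j, a x i j * sdv (barr c R k) x i j)
        + fderiv ℝ (barr c R k) x (b x u) + (r x u - lam) * barr c R k x) ≤ 0) → False := by
    intro x hx t s ht hm h0 hL
    have hmem : ∀ u : U, (x, u) ∈ closedBall c R ×ˢ (univ : Set U) :=
      fun u => ⟨bsub hx, mem_univ _⟩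
    refine aux_point a b r x (ha_symm x (bsub hx))
      (fun z => le_trans (by positivity) (hell x (bsub hx) z).1)
      (hb_cont.comp_continuous (f := fun u : U => (x, u)) (by fun_prop) hmem)
      (hr_cont.comp_continuous (f := fun u : U => (x, u)) (by fun_prop) hmem)
      ψ φ (barr c R k) (hψ_reg.contDiffAt (isOpen_ball.mem_nhds hx))
      (hφ_reg.contDiffAt (isOpen_ball.mem_nhds hx)) (barr_contDiff c R k).contDiffAt
      t s ht hm h0 lamB lam hcon (hψ_pos x hx) (hψ_eq x hx) (hφ_le x hx) hL
  have hnc : Continuous (fun x : EuclideanSpace ℝ (Fin d) => ‖x - c‖ ^ 2) := by fun_prop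
  -- nonnegativity of `φ` on the closed ball
  have hφ0 : ∀ x ∈ closedBall c R, 0 ≤ φ x := by
    intro x hx
    have hx' : x ∈ closure (ball c R) := by rwa [closure_ball c hR.ne']
    have hcl : closure (ball c R) ⊆ closedBall c R := closure_ball_subset_closedBall
    have hmt : MapsTo φ (ball c R) (Ici 0) := fun y hy => (hφ_pos y hy).le
    have := hmt.closure_of_continuousOn (hφ_cont.mono hcl) hx'
    simpa using this
  -- the annulus
  have hann : ∀ t : ℝ, 0 ≤ t →
      (∀ x ∈ closedBall c R, ‖x - c‖ ^ 2 ≤ R ^ 2 - δ → ψ x - t * φ x ≤ 0) →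
      ∀ x ∈ closedBall c R, ψ x - t * φ x ≤ 0 := by
    intro t ht hK x1 hx1
    by_contra hneg
    push Not at hneg
    set A : Set (EuclideanSpace ℝ (Fin d)) := closedBall c R ∩ {x | R ^ 2 - δ ≤ ‖x - c‖ ^ 2}
      with hAdef
    have hAc : IsCompact A := (isCompact_closedBall c R).inter_right
      (isClosed_le continuous_const hnc)
    have hx1A : x1 ∈ A := by
      refine ⟨hx1, ?_⟩
      by_contra hh
      simp only [mem_ofPred_eq, not_le] at hh
      exact absurd (hK x1 hx1 hh.le) (not_le.2 hneg)
    have hbA : ∀ x ∈ A, 0 < barr c R k x := fun x hx =>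
      (hbar x hx.1 (by have := hx.2; simp only [mem_ofPred_eq] at this; linarith)).1
    have hwc : ContinuousOn (fun x => (ψ x - t * φ x) / barr c R k x) A := by
      refine ContinuousOn.div ?_ (barr_contDiff c R k).continuous.continuousOn
        (fun x hx => (hbA x hx).ne')
      exact ((hψ_cont.sub (continuousOn_const.mul hφ_cont)).mono inter_subset_left)
    obtain ⟨x0, hx0, hmax⟩ := hAc.exists_isMaxOn ⟨x1, hx1A⟩ hwc
    set s := (ψ x0 - t * φ x0) / barr c R k x0 with hsdef
    have hs : 0 < s := lt_of_lt_of_le (div_pos hneg (hbA x1 hx1A)) (hmax hx1A)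
    have hw0 : 0 < ψ x0 - t * φ x0 := by
      have := mul_pos hs (hbA x0 hx0)
      rwa [hsdef, div_mul_cancel₀ _ (hbA x0 hx0).ne'] at this
    have hx0b : x0 ∈ ball c R := by
      by_contra hnb
      have hsp : x0 ∈ sphere c R := by
        have h1 := hx0.1
        simp only [mem_closedBall, mem_ball, mem_sphere, not_lt] at *
        exact le_antisymm h1 hnb
      have h1 := hψ_bd x0 hsp
      have h2 := mul_nonneg ht (hφ0 x0 hx0.1)
      linarith
    have hx0i : R ^ 2 - δ < ‖x0 - c‖ ^ 2 := by
      by_contra hh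
      push Not at hh
      exact absurd (hK x0 hx0.1 hh) (not_le.2 hw0)
    have hAn : A ∈ nhds x0 := by
      refine Filter.inter_mem (Filter.mem_of_superset (isOpen_ball.mem_nhds hx0b) bsub) ?_
      refine Filter.mem_of_superset ((isOpen_lt continuous_const hnc).mem_nhds hx0i) ?_
      intro y hy
      have hy' : R ^ 2 - δ < ‖y - c‖ ^ 2 := hy
      exact hy'.le
    have h00 : ψ x0 - t * φ x0 - s * barr c R k x0 = 0 := by
      rw [hsdef, div_mul_cancel₀ _ (hbA x0 hx0).ne']; ring
    refine point x0 hx0b t s ht ?_ h00 ?_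
    · filter_upwards [hAn] with y hy
      rw [h00]
      have h1 : (ψ y - t * φ y) / barr c R k y ≤ s := hmax hy
      rw [div_le_iff₀ (hbA y hy)] at h1
      linarith
    · intro u
      exact mul_nonpos_of_nonneg_of_nonpos hs.le ((hbar x0 hx0.1 (by linarith)).2 u)
  -- the inner compact set
  set K : Set (EuclideanSpace ℝ (Fin d)) := closedBall c R ∩ {x | ‖x - c‖ ^ 2 ≤ R ^ 2 - δ}
    with hKdef
  have hKc : IsCompact K := (isCompact_closedBall c R).inter_right
      (isClosed_le hnc continuous_const)
  have hKb : K ⊆ ball c R := by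
    intro x hx
    have h1 : ‖x - c‖ ^ 2 ≤ R ^ 2 - δ := hx.2
    rw [mem_ball, dist_eq_norm]
    exact lt_of_pow_lt_pow_left₀ 2 hR.le (by linarith)
  have hcK : c ∈ K := ⟨mem_closedBall_self hR.le, by simp; linarith⟩
  have hqc : ContinuousOn (fun x => ψ x / φ x) K :=
    ContinuousOn.div (hψ_cont.mono inter_subset_left) (hφ_cont.mono inter_subset_left)
      (fun x hx => (hφ_pos x (hKb hx)).ne')
  obtain ⟨x0, hx0, hmax⟩ := hKc.exists_isMaxOn ⟨c, hcK⟩ hqc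
  set t := ψ x0 / φ x0 with htdef
  have hx0b := hKb hx0
  have ht : 0 < t := div_pos (hψ_pos x0 hx0b) (hφ_pos x0 hx0b)
  have hall := hann t ht.le (fun x hx hx2 => by
    have h1 : ψ x / φ x ≤ t := hmax (show x ∈ K from ⟨hx, hx2⟩)
    rw [div_le_iff₀ (hφ_pos x (hKb ⟨hx, hx2⟩))] at h1
    linarith)
  have h00 : ψ x0 - t * φ x0 = 0 := by
    rw [htdef, div_mul_cancel₀ _ (hφ_pos x0 hx0b).ne']; ring
  refine point x0 hx0b t 0 ht.le ?_ (by linarith) (by simp)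
  filter_upwards [isOpen_ball.mem_nhds hx0b] with y hy
  have := hall y (bsub hy)
  simp only [zero_mul, sub_zero]
  linarith

/-- **Theorem 3.1 (identification part), classical-solution rendering on a ball.**
Any Dirichlet eigenvalue with positive eigenfunction vanishing on the boundary equals the
generalized principal eigenvalue
`λ⁺(B) = inf { λ | ∃ φ ∈ C²(B) ∩ C(B̄), φ > 0 in B, Gφ ≤ λφ in B }`. -/
theorem dirichlet_eigenvalue_eq_generalized_principal_eigenvalue
    {d : ℕ} (hd : 1 ≤ d) {U : Type*} [MetricSpace U] [CompactSpace U] [Nonempty U]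
    (c : EuclideanSpace ℝ (Fin d)) (R : ℝ) (hR : 0 < R)
    (a : EuclideanSpace ℝ (Fin d) → Matrix (Fin d) (Fin d) ℝ)
    (b : EuclideanSpace ℝ (Fin d) → U → EuclideanSpace ℝ (Fin d))
    (r : EuclideanSpace ℝ (Fin d) → U → ℝ)
    -- `a` is Lipschitz on the closed ball
    (ha_lip : ∃ K : NNReal, ∀ i j, LipschitzOnWith K (fun x => a x i j) (closedBall c R))
    -- each `a(x)` is symmetric
    (ha_symm : ∀ x ∈ closedBall c R, (a x).IsSymm)
    -- uniform ellipticity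
    (ha_ell : ∃ C : ℝ, 1 ≤ C ∧ ∀ x ∈ closedBall c R, ∀ z : EuclideanSpace ℝ (Fin d),
      C⁻¹ * ‖z‖ ^ 2 ≤ quadForm (a x) z ∧ quadForm (a x) z ≤ C * ‖z‖ ^ 2)
    -- joint continuity of `b` and `r`
    (hb_cont : ContinuousOn (fun p : EuclideanSpace ℝ (Fin d) × U => b p.1 p.2)
      (closedBall c R ×ˢ univ))
    (hr_cont : ContinuousOn (fun p : EuclideanSpace ℝ (Fin d) × U => r p.1 p.2)
      (closedBall c R ×ˢ univ))
    -- Lipschitz continuity in `x`, uniformly in `u`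
    (hb_lip : ∃ K : NNReal, ∀ u : U, LipschitzOnWith K (fun x => b x u) (closedBall c R))
    (hr_lip : ∃ K : NNReal, ∀ u : U, LipschitzOnWith K (fun x => r x u) (closedBall c R))
    -- the given eigenpair
    (lamB : ℝ) (ψ : EuclideanSpace ℝ (Fin d) → ℝ)
    (hψ_reg : ContDiffOn ℝ 2 ψ (ball c R)) (hψ_cont : ContinuousOn ψ (closedBall c R))
    (hψ_pos : ∀ x ∈ ball c R, 0 < ψ x) (hψ_bd : ∀ x ∈ sphere c R, ψ x = 0)
    (hψ_eq : ∀ x ∈ ball c R, Gop a b r ψ x = lamB * ψ x) :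
    lamB = sInf { lam : ℝ | ∃ φ : EuclideanSpace ℝ (Fin d) → ℝ,
      ContDiffOn ℝ 2 φ (ball c R) ∧ ContinuousOn φ (closedBall c R) ∧
      (∀ x ∈ ball c R, 0 < φ x) ∧
      (∀ x ∈ ball c R, Gop a b r φ x ≤ lam * φ x) } := by

  symm
  refine IsLeast.csInf_eq ⟨⟨ψ, hψ_reg, hψ_cont, hψ_pos, fun x hx => (hψ_eq x hx).le⟩, ?_⟩
  rintro lam ⟨φ, h1, h2, h3, h4⟩
  exact aux_main c R hR a b r ha_symm ha_ell hb_cont hr_cont lamB ψ hψ_reg hψ_cont hψ_pos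
    hψ_bd hψ_eq lam φ h1 h2 h3 h4
end

section
/- Comparison/simplicity theorem on bounded domains (Theorem A.4, classical-solution rendering): Let λ ∈ ℝ and suppose ψ and φ are C² on D and continuous on D̄ and satisfy: Gψ ≤ λψ in D with ψ > 0 in D; Gφ ≥ λφ in D; φ ≤ 0 on ∂D; and φ(x₀) > 0 for some x₀ ∈ D. Then ψ = t·φ for some t > 0. -/
open Metric Set MeasureTheory

open Filter Topology

namespace CSB

lemma sdv_eq {d : ℕ} {φ : EuclideanSpace ℝ (Fin d) → ℝ} {x : EuclideanSpace ℝ (Fin d)}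
    (h : ContDiffAt ℝ 2 φ x) (i j : Fin d) :
    sdv φ x i j = fderiv ℝ (fderiv ℝ φ) x (EuclideanSpace.single i 1)
      (EuclideanSpace.single j 1) := by
  have h1 : DifferentiableAt ℝ (fderiv ℝ φ) x :=
    (h.fderiv_right (m := 1) (by norm_num)).differentiableAt (by norm_num)
  unfold sdv
  rw [fderiv_clm_apply h1 (differentiableAt_const _)]
  simp

lemma sdv_symm {d : ℕ} {φ : EuclideanSpace ℝ (Fin d) → ℝ} {x : EuclideanSpace ℝ (Fin d)}
    (h : ContDiffAt ℝ 2 φ x) (i j : Fin d) : sdv φ x i j = sdv φ x j i := by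
  rw [sdv_eq h, sdv_eq h]
  exact (h.isSymmSndFDerivAt (by simp)) _ _

lemma sum_single {d : ℕ} (z : EuclideanSpace ℝ (Fin d)) :
    z = ∑ i, z i • (EuclideanSpace.single i (1 : ℝ)) := by
  ext j
  simp [Finset.sum_apply, Pi.single_apply]

lemma quad_sdv {d : ℕ} {φ : EuclideanSpace ℝ (Fin d) → ℝ} {x : EuclideanSpace ℝ (Fin d)}
    (h : ContDiffAt ℝ 2 φ x) (z : EuclideanSpace ℝ (Fin d)) :
    quadForm (Matrix.of (sdv φ x)) z = fderiv ℝ (fderiv ℝ φ) x z z := by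
  conv_rhs => rw [sum_single z]
  simp only [quadForm, Matrix.of_apply, map_sum, map_smul, _root_.sum_apply,
    FunLike.coe_smul, Pi.smul_apply,
    smul_eq_mul, Finset.mul_sum, sdv_eq h]
  rw [Finset.sum_comm]
  refine Finset.sum_congr rfl fun i _ => Finset.sum_congr rfl fun j _ => ?_
  ring

lemma one_dim {f : ℝ → ℝ} {x : ℝ} (hf : IsLocalMax f x) (hc : ContinuousAt f x) :
    deriv (deriv f) x ≤ 0 := by
  by_contra! hlt
  have hmin := isLocalMin_of_deriv_deriv_pos hlt hf.deriv_eq_zero hc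
  have hev : f =ᶠ[𝓝 x] fun _ => f x := by
    filter_upwards [hf, hmin] with y h1 h2 using le_antisymm h1 h2
  have h1 := hev.deriv
  have h2 := h1.deriv_eq
  simp at h2
  linarith

lemma quad_nonpos {d : ℕ} {φ : EuclideanSpace ℝ (Fin d) → ℝ} {x : EuclideanSpace ℝ (Fin d)}
    (h : ContDiffAt ℝ 2 φ x) (hm : IsLocalMax φ x) (z : EuclideanSpace ℝ (Fin d)) :
    quadForm (Matrix.of (sdv φ x)) z ≤ 0 := by
  rw [quad_sdv h]
  let g : ℝ → EuclideanSpace ℝ (Fin d) := fun s => x + s • z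
  have hg : ∀ s, HasDerivAt g z s := fun s => by
    have := ((hasDerivAt_id s).smul_const z).const_add x
    rw [one_smul] at this
    exact this
  have hg0 : g 0 = x := by simp [g]
  have hgt : Tendsto g (𝓝 0) (𝓝 x) := by
    have := (hg 0).continuousAt.tendsto
    rwa [hg0] at this
  have hloc : IsLocalMax (φ ∘ g) 0 := by
    have := hgt.eventually hm
    filter_upwards [this] with s hs
    simpa [hg0] using hs
  have hd : ∀ᶠ y in 𝓝 x, ContDiffAt ℝ 2 φ y := h.eventually (by simp)
  have h1 : deriv (φ ∘ g) =ᶠ[𝓝 0] fun s => fderiv ℝ φ (g s) z := by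
    filter_upwards [hgt.eventually hd] with s hs
    exact ((hs.differentiableAt (by norm_num)).hasFDerivAt.comp_hasDerivAt s (hg s)).deriv
  have h2 : DifferentiableAt ℝ (fderiv ℝ φ) x :=
    (h.fderiv_right (m := 1) (by norm_num)).differentiableAt (by norm_num)
  have h3 : HasDerivAt (fun s => fderiv ℝ φ (g s) z) (fderiv ℝ (fderiv ℝ φ) x z z) 0 := by
    have h4 : HasFDerivAt (fderiv ℝ φ) (fderiv ℝ (fderiv ℝ φ) x) (g 0) := by
      rw [hg0]; exact h2.hasFDerivAt
    have := (h4.comp_hasDerivAt 0 (hg 0)).clm_apply (hasDerivAt_const 0 z)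
    simpa using this
  have h5 := one_dim hloc (by
    refine ContinuousAt.comp ?_ (hg 0).continuousAt
    rw [hg0]; exact h.continuousAt)
  rwa [h1.deriv_eq, h3.deriv] at h5

lemma psd_neg {d : ℕ} {H : Matrix (Fin d) (Fin d) ℝ} (hs : ∀ i j, H i j = H j i)
    (hq : ∀ z, quadForm H z ≤ 0) : (-H).PosSemidef := by
  refine .of_dotProduct_mulVec_nonneg ?_ fun x => ?_
  · ext i j; simp [hs i j]
  · have := hq (WithLp.toLp 2 x)
    simp only [quadForm] at this
    simp only [dotProduct, Matrix.mulVec, Finset.mul_sum, Matrix.neg_apply]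
    have e : (∑ i, ∑ j, star x i * (-H i j * x j)) = - ∑ i, ∑ j, x i * H i j * x j := by
      simp only [← Finset.sum_neg_distrib]
      refine Finset.sum_congr rfl fun i _ => Finset.sum_congr rfl fun j _ => ?_
      simp; ring
    rw [e]; linarith

lemma trace_ineq {d : ℕ} {A H : Matrix (Fin d) (Fin d) ℝ} {c : ℝ}
    (hA : ∀ z, c * ‖z‖ ^ 2 ≤ quadForm A z) (hs : ∀ i j, H i j = H j i)
    (hq : ∀ z, quadForm H z ≤ 0) :
    ∑ i, ∑ j, A i j * H i j ≤ c * ∑ i, H i i := by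
  obtain ⟨m, v, hv⟩ := Matrix.posSemidef_iff_eq_sum_vecMulVec.mp (psd_neg hs hq)
  have hH : ∀ i j, H i j = - ∑ k, v k i * v k j := by
    intro i j
    have := congrFun (congrFun hv i) j
    simp [Matrix.sum_apply, Matrix.vecMulVec_apply] at this
    linarith
  have e1 : ∑ i, ∑ j, A i j * H i j = - ∑ k, quadForm A (WithLp.toLp 2 (v k)) := by
    simp only [hH, quadForm, mul_neg, Finset.sum_neg_distrib, Finset.mul_sum]
    congr 1
    conv_rhs => rw [Finset.sum_comm]
    refine Finset.sum_congr rfl fun i _ => ?_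
    rw [Finset.sum_comm]
    refine Finset.sum_congr rfl fun j _ => Finset.sum_congr rfl fun k _ => ?_
    ring
  have e2 : ∑ i, H i i = - ∑ k, ‖(WithLp.toLp 2 (v k) : EuclideanSpace ℝ (Fin d))‖ ^ 2 := by
    simp only [hH, EuclideanSpace.norm_sq_eq, Finset.sum_neg_distrib]
    rw [Finset.sum_comm]
    congr 1
    refine Finset.sum_congr rfl fun i _ => Finset.sum_congr rfl fun k _ => ?_
    simp [sq]
  rw [e1, e2, mul_neg, Finset.mul_sum]
  exact neg_le_neg (Finset.sum_le_sum fun k _ => hA _)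

lemma det_bound {d : ℕ} {H : Matrix (Fin d) (Fin d) ℝ} {κ : ℝ} (hs : ∀ i j, H i j = H j i)
    (hq : ∀ z, quadForm H z ≤ 0) (hκ : - ∑ i, H i i ≤ κ) : |H.det| ≤ κ ^ d := by
  have hp := psd_neg hs hq
  have h1 : |H.det| = |(-H).det| := by
    rw [Matrix.det_neg, abs_mul]; simp
  have h2 := hp.1.trace_eq_sum_eigenvalues
  have h3 : (-H).trace = - ∑ i, H i i := by simp [Matrix.trace]
  rw [h1, hp.1.det_eq_prod_eigenvalues]
  simp only [RCLike.ofReal_real_eq_id, id] at h2 ⊢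
  have h4 : ∀ i, hp.1.eigenvalues i ≤ κ := fun i => by
    have := Finset.single_le_sum (f := hp.1.eigenvalues)
      (fun j _ => hp.eigenvalues_nonneg j) (Finset.mem_univ i)
    linarith
  rw [abs_of_nonneg (Finset.prod_nonneg fun i _ => hp.eigenvalues_nonneg i)]
  calc _ ≤ ∏ i : Fin d, κ := Finset.prod_le_prod (fun i _ => hp.eigenvalues_nonneg i) fun i _ => h4 i
    _ = κ ^ d := by simp

lemma sdv_sub {d : ℕ} {φ ψ : EuclideanSpace ℝ (Fin d) → ℝ} {x : EuclideanSpace ℝ (Fin d)}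
    (h : ContDiffAt ℝ 2 φ x) (h' : ContDiffAt ℝ 2 ψ x) (t : ℝ) (i j : Fin d) :
    sdv (fun y => φ y - t * ψ y) x i j = sdv φ x i j - t * sdv ψ x i j := by
  have hev : fderiv ℝ (fun y => φ y - t * ψ y) =ᶠ[𝓝 x]
      fun y => fderiv ℝ φ y - t • fderiv ℝ ψ y := by
    filter_upwards [h.eventually (by simp), h'.eventually (by simp)] with y hy hy'
    rw [fderiv_fun_sub (hy.differentiableAt (by norm_num))
      ((hy'.differentiableAt (by norm_num)).const_mul t),
      fderiv_const_mul (hy'.differentiableAt (by norm_num))]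
  have h1 : DifferentiableAt ℝ (fderiv ℝ φ) x :=
    (h.fderiv_right (m := 1) (by norm_num)).differentiableAt (by norm_num)
  have h2 : DifferentiableAt ℝ (fderiv ℝ ψ) x :=
    (h'.fderiv_right (m := 1) (by norm_num)).differentiableAt (by norm_num)
  rw [sdv_eq (h.sub (contDiffAt_const.mul h')), sdv_eq h, sdv_eq h', hev.fderiv_eq,
    fderiv_fun_sub h1 (h2.fun_const_smul t), fderiv_fun_const_smul h2]
  simp

lemma gradient_sub {d : ℕ} {φ ψ : EuclideanSpace ℝ (Fin d) → ℝ} {x : EuclideanSpace ℝ (Fin d)}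
    (h : ContDiffAt ℝ 2 φ x) (h' : ContDiffAt ℝ 2 ψ x) (t : ℝ) :
    gradient (fun y => φ y - t * ψ y) x = gradient φ x - t • gradient ψ x := by
  have hy := h.differentiableAt (by norm_num)
  have hy' := h'.differentiableAt (by norm_num)
  unfold gradient
  rw [fderiv_fun_sub hy (hy'.const_mul t), fderiv_const_mul hy']
  simp

/-- The linearized differential inequality. -/
def SubSol {d : ℕ} (D : Set (EuclideanSpace ℝ (Fin d)))
    (a : EuclideanSpace ℝ (Fin d) → Matrix (Fin d) (Fin d) ℝ) (M c : ℝ)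
    (w : EuclideanSpace ℝ (Fin d) → ℝ) : Prop :=
  ∀ x ∈ D, 0 ≤ (∑ i, ∑ j, a x i j * sdv w x i j) + M * ‖gradient w x‖ + c * |w x|

lemma subSol_of_G {d : ℕ} {U : Type*} [Nonempty U]
    {D : Set (EuclideanSpace ℝ (Fin d))} (hD_open : IsOpen D)
    {a : EuclideanSpace ℝ (Fin d) → Matrix (Fin d) (Fin d) ℝ}
    {b : EuclideanSpace ℝ (Fin d) → U → EuclideanSpace ℝ (Fin d)}
    {r : EuclideanSpace ℝ (Fin d) → U → ℝ} {M r₀ : ℝ}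
    (hb : ∀ x ∈ D, ∀ u, ‖b x u‖ ≤ M) (hr : ∀ x ∈ D, ∀ u, |r x u| ≤ r₀)
    (lam : ℝ) {ψ φ : EuclideanSpace ℝ (Fin d) → ℝ}
    (hψ_reg : ContDiffOn ℝ 2 ψ D) (hφ_reg : ContDiffOn ℝ 2 φ D)
    (hψ_sub : ∀ x ∈ D, Gop a b r ψ x ≤ lam * ψ x)
    (hφ_sup : ∀ x ∈ D, lam * φ x ≤ Gop a b r φ x) {t : ℝ} (ht : 0 ≤ t) :
    SubSol D a M (r₀ + |lam|) (fun y => φ y - t * ψ y) := by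
  intro x hx
  have h := hφ_reg.contDiffAt (hD_open.mem_nhds hx)
  have h' := hψ_reg.contDiffAt (hD_open.mem_nhds hx)
  have e1 : (∑ i, ∑ j, a x i j * sdv (fun y => φ y - t * ψ y) x i j) =
      (∑ i, ∑ j, a x i j * sdv φ x i j) - t * (∑ i, ∑ j, a x i j * sdv ψ x i j) := by
    simp only [sdv_sub h h', Finset.mul_sum, ← Finset.sum_sub_distrib]
    refine Finset.sum_congr rfl fun i _ => Finset.sum_congr rfl fun j _ => ?_
    ring
  have h1 := hψ_sub x hx
  have h2 := hφ_sup x hx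
  unfold Gop at h1 h2
  set w : ℝ := φ x - t * ψ x with hw
  have hbdd : BddBelow (Set.range fun u : U =>
      (inner ℝ (b x u) (gradient φ x) : ℝ) + r x u * φ x) := by
    refine ⟨-(M * ‖gradient φ x‖) - r₀ * |φ x|, ?_⟩
    rintro _ ⟨u, rfl⟩
    have i1 := (abs_le.mp (abs_real_inner_le_norm (b x u) (gradient φ x))).1
    have i2 := mul_le_mul_of_nonneg_right (hb x hx u) (norm_nonneg (gradient φ x))
    have i3 := neg_abs_le (r x u * φ x)
    rw [abs_mul] at i3
    have i4 := mul_le_mul_of_nonneg_right (hr x hx u) (abs_nonneg (φ x))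
    simp only
    linarith
  have key : (⨅ u : U, ((inner ℝ (b x u) (gradient φ x) : ℝ) + r x u * φ x))
      - M * ‖gradient (fun y => φ y - t * ψ y) x‖ - r₀ * |w|
      ≤ t * ⨅ u : U, ((inner ℝ (b x u) (gradient ψ x) : ℝ) + r x u * ψ x) := by
    rw [Real.mul_iInf_of_nonneg ht]
    refine le_ciInf fun u => ?_
    have i0 := ciInf_le hbdd u
    have i1 := (abs_le.mp (abs_real_inner_le_norm (b x u)
      (gradient (fun y => φ y - t * ψ y) x))).2
    have i2 := mul_le_mul_of_nonneg_right (hb x hx u)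
      (norm_nonneg (gradient (fun y => φ y - t * ψ y) x))
    have i3 := le_abs_self (r x u * w)
    rw [abs_mul] at i3
    have i4 := mul_le_mul_of_nonneg_right (hr x hx u) (abs_nonneg w)
    have i5 : (inner ℝ (b x u) (gradient (fun y => φ y - t * ψ y) x) : ℝ)
        = inner ℝ (b x u) (gradient φ x) - t * inner ℝ (b x u) (gradient ψ x) := by
      rw [gradient_sub h h', inner_sub_right, real_inner_smul_right]
    have i6 : r x u * w = r x u * φ x - t * (r x u * ψ x) := by rw [hw]; ring
    linarith
  have h3 := mul_le_mul_of_nonneg_left h1 ht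
  have i7 : -(|lam| * |w|) ≤ lam * w := by
    rw [← abs_mul]; exact neg_abs_le _
  have i8 : lam * w = lam * φ x - t * (lam * ψ x) := by rw [hw]; ring
  rw [e1]
  linarith

lemma gradient_differentiableAt {d : ℕ} {w : EuclideanSpace ℝ (Fin d) → ℝ}
    {x : EuclideanSpace ℝ (Fin d)} (h : ContDiffAt ℝ 2 w x) :
    DifferentiableAt ℝ (gradient w) x := by
  have h1 : DifferentiableAt ℝ (fderiv ℝ w) x :=
    (h.fderiv_right (m := 1) (by norm_num)).differentiableAt (by norm_num)
  exact ((InnerProductSpace.toDual ℝ (EuclideanSpace ℝ (Fin d))).symm.toContinuousLinearEquiv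
    |>.differentiableAt).comp x h1

lemma gradient_apply {d : ℕ} {w : EuclideanSpace ℝ (Fin d) → ℝ}
    (x : EuclideanSpace ℝ (Fin d)) (j : Fin d) :
    gradient w x j = fderiv ℝ w x (EuclideanSpace.single j 1) := by
  rw [← inner_gradient_left, EuclideanSpace.inner_single_right]
  simp

lemma det_gradient {d : ℕ} {w : EuclideanSpace ℝ (Fin d) → ℝ}
    {x : EuclideanSpace ℝ (Fin d)} (h : ContDiffAt ℝ 2 w x) :
    (fderiv ℝ (gradient w) x).det = (Matrix.of (sdv w x)).det := by
  have hg := gradient_differentiableAt h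
  unfold ContinuousLinearMap.det
  rw [← LinearMap.det_toMatrix (EuclideanSpace.basisFun (Fin d) ℝ).toBasis,
    ← Matrix.det_transpose]
  congr 1
  ext i j
  simp only [Matrix.transpose_apply, LinearMap.toMatrix_apply, Matrix.of_apply]
  simp only [OrthonormalBasis.coe_toBasis, EuclideanSpace.basisFun_apply,
    OrthonormalBasis.coe_toBasis_repr_apply, EuclideanSpace.basisFun_repr]
  have h1 : HasFDerivAt (fun y => gradient w y j)
      ((EuclideanSpace.proj j : EuclideanSpace ℝ (Fin d) →L[ℝ] ℝ).comp
        (fderiv ℝ (gradient w) x)) x :=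
    (EuclideanSpace.proj j : EuclideanSpace ℝ (Fin d) →L[ℝ] ℝ).hasFDerivAt.comp x hg.hasFDerivAt
  unfold sdv
  rw [← (funext fun y => gradient_apply y j : (fun y => gradient w y j) = _), h1.fderiv]
  simp

lemma affine_fderiv {d : ℕ} (p x₁ : EuclideanSpace ℝ (Fin d)) :
    fderiv ℝ (fun y => (inner ℝ p (y - x₁) : ℝ)) = fun _ => innerSL ℝ p := by
  funext y
  have : HasFDerivAt (fun y => (inner ℝ p (y - x₁) : ℝ)) (innerSL ℝ p) y := by
    have := (innerSL ℝ p).hasFDerivAt.comp y ((hasFDerivAt_id y).sub_const x₁)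
    rw [ContinuousLinearMap.comp_id] at this
    exact this
  exact this.fderiv

lemma affine_sdv {d : ℕ} (p x₁ x : EuclideanSpace ℝ (Fin d)) (i j : Fin d) :
    sdv (fun y => (inner ℝ p (y - x₁) : ℝ)) x i j = 0 := by
  unfold sdv
  rw [affine_fderiv]
  simp

lemma affine_gradient {d : ℕ} (p x₁ x : EuclideanSpace ℝ (Fin d)) :
    gradient (fun y => (inner ℝ p (y - x₁) : ℝ)) x = p := by
  unfold gradient
  rw [affine_fderiv]
  exact (LinearIsometryEquiv.symm_apply_eq _).mpr rfl

lemma abp {d : ℕ} {D Ω : Set (EuclideanSpace ℝ (Fin d))} (hDo : IsOpen D)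
    (hDb : Bornology.IsBounded D) {L C M c : ℝ} (hL : 0 < L)
    (hdist : ∀ x ∈ closure D, ∀ y ∈ closure D, dist x y ≤ L)
    (hC : 1 ≤ C) (hM : 0 ≤ M) (hc : 0 ≤ c)
    {a : EuclideanSpace ℝ (Fin d) → Matrix (Fin d) (Fin d) ℝ}
    (ha : ∀ x ∈ D, ∀ z : EuclideanSpace ℝ (Fin d), C⁻¹ * ‖z‖ ^ 2 ≤ quadForm (a x) z)
    {w : EuclideanSpace ℝ (Fin d) → ℝ} (hw : ContDiffOn ℝ 2 w D)
    (hwc : ContinuousOn w (closure D)) (hs : SubSol D a M c w)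
    (hΩo : IsOpen Ω) (hΩD : Ω ⊆ D) (hbd : ∀ x ∈ frontier Ω, w x ≤ 0)
    (hvol : volume Ω < ENNReal.ofReal ((1 / (L * (C * (M / L + c) + 1))) ^ d)
      * volume (ball (0 : EuclideanSpace ℝ (Fin d)) 1)) :
    ∀ x ∈ Ω, w x ≤ 0 := by
  by_contra! hcon
  obtain ⟨x₂, hx₂, hpos⟩ := hcon
  have hcl : closure Ω ⊆ closure D := closure_mono hΩD
  have hcomp : IsCompact (closure Ω) := (hDb.subset hΩD).isCompact_closure
  have hfr : ∀ x ∈ closure Ω, 0 < w x → x ∈ Ω := by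
    intro x hx h0
    by_contra hn
    have : x ∈ frontier Ω := by rw [hΩo.frontier_eq]; exact ⟨hx, hn⟩
    linarith [hbd x this]
  obtain ⟨x₁, hx₁c, hx₁⟩ := hcomp.exists_isMaxOn ⟨x₂, subset_closure hx₂⟩ (hwc.mono hcl)
  set m := w x₁ with hm
  have hm0 : 0 < m := lt_of_lt_of_le hpos (hx₁ (subset_closure hx₂))
  have hx₁Ω : x₁ ∈ Ω := hfr x₁ hx₁c hm0
  set k := C * (M / L + c) + 1 with hk
  have hk0 : 0 < k := by positivity
  set A := Ω ∩ {x | |(fderiv ℝ (gradient w) x).det| ≤ (m * k) ^ d} with hA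
  have hAm : MeasurableSet A := by
    refine hΩo.measurableSet.inter ?_
    refine measurableSet_le ?_ measurable_const
    exact ((ContinuousLinearMap.continuous_det).measurable.comp (measurable_fderiv ℝ _)).norm
  have hsub : ball (0 : EuclideanSpace ℝ (Fin d)) (m / L) ⊆ gradient w '' A := by
    intro p hp
    rw [mem_ball_zero_iff] at hp
    have hpL : ‖p‖ * L < m := by rwa [lt_div_iff₀ hL] at hp
    let ℓ : EuclideanSpace ℝ (Fin d) → ℝ := fun y => inner ℝ p (y - x₁)
    have hℓ : ContDiff ℝ 2 ℓ := by
      exact contDiff_const.inner ℝ (contDiff_id.sub contDiff_const)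
    have hℓb : ∀ y ∈ closure Ω, |ℓ y| ≤ ‖p‖ * L := fun y hy => by
      refine (abs_real_inner_le_norm _ _).trans ?_
      refine mul_le_mul_of_nonneg_left ?_ (norm_nonneg _)
      rw [← dist_eq_norm]
      exact hdist _ (hcl hy) _ (hcl hx₁c)
    obtain ⟨x, hxc, hx⟩ := hcomp.exists_isMaxOn (f := fun y => w y - 1 * ℓ y)
      ⟨x₂, subset_closure hx₂⟩
      ((hwc.mono hcl).sub (continuousOn_const.mul hℓ.continuous.continuousOn))
    have h1 : m ≤ w x - 1 * ℓ x := by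
      have := hx hx₁c
      simpa [ℓ] using this
    have h2 := abs_le.mp (hℓb x hxc)
    have hwx : 0 < w x := by linarith
    have hwm : w x ≤ m := hx₁ hxc
    have hxΩ := hfr x hxc hwx
    have hwd : ContDiffAt ℝ 2 w x := hw.contDiffAt (hDo.mem_nhds (hΩD hxΩ))
    have hloc : IsLocalMax (fun y => w y - 1 * ℓ y) x :=
      (hx.filter_mono (by
        rw [le_principal_iff]
        exact mem_of_superset (hΩo.mem_nhds hxΩ) subset_closure))
    have hg : gradient (fun y => w y - 1 * ℓ y) x = 0 := by
      unfold gradient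
      rw [hloc.fderiv_eq_zero]; simp
    rw [gradient_sub hwd hℓ.contDiffAt, affine_gradient, one_smul, sub_eq_zero] at hg
    have hq := quad_nonpos (hwd.sub (contDiffAt_const.mul hℓ.contDiffAt)) hloc
    have hsd : sdv (fun y => w y - 1 * ℓ y) x = sdv w x := by
      funext i j
      rw [sdv_sub hwd hℓ.contDiffAt, affine_sdv]; ring
    have hq' : ∀ z, quadForm (Matrix.of (sdv w x)) z ≤ 0 := by
      intro z
      have := hq z
      rwa [hsd] at this
    have hsym : ∀ i j, (Matrix.of (sdv w x)) i j = (Matrix.of (sdv w x)) j i :=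
      fun i j => sdv_symm hwd i j
    have htr := trace_ineq (ha x (hΩD hxΩ)) hsym hq'
    have h0 := hs x (hΩD hxΩ)
    rw [hg, abs_of_pos hwx] at h0
    simp only [Matrix.of_apply] at htr
    refine ⟨x, ⟨hxΩ, ?_⟩, hg⟩
    rw [mem_ofPred_eq, det_gradient hwd]
    refine det_bound hsym hq' ?_
    simp only [Matrix.of_apply]
    have h3 : M * ‖p‖ ≤ M * (m / L) := mul_le_mul_of_nonneg_left hp.le hM
    have h4 : c * w x ≤ c * m := mul_le_mul_of_nonneg_left hwm hc
    have hC0 : 0 < C := by linarith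
    have h5 : C⁻¹ * (-∑ i, sdv w x i i) ≤ M * (m / L) + c * m := by linarith
    rw [inv_mul_le_iff₀ hC0] at h5
    have h6 : m * k = C * (M * (m / L) + c * m) + m := by rw [hk]; ring
    linarith
  have hvol1 : volume (ball (0 : EuclideanSpace ℝ (Fin d)) (m / L)) ≤
      ENNReal.ofReal ((m * k) ^ d) * volume Ω := by
    calc _ ≤ volume (gradient w '' A) := measure_mono hsub
      _ ≤ ∫⁻ x in A, ENNReal.ofReal |(fderiv ℝ (gradient w) x).det| :=
        addHaar_image_le_lintegral_abs_det_fderiv volume hAm fun x hx =>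
          (gradient_differentiableAt
            (hw.contDiffAt (hDo.mem_nhds (hΩD hx.1)))).hasFDerivAt.hasFDerivWithinAt
      _ ≤ ∫⁻ x in A, ENNReal.ofReal ((m * k) ^ d) :=
        setLIntegral_mono measurable_const fun x hx => ENNReal.ofReal_le_ofReal hx.2
      _ = ENNReal.ofReal ((m * k) ^ d) * volume A := by simp
      _ ≤ _ := by gcongr; exact inter_subset_left
  rw [Measure.addHaar_ball_of_pos _ _ (by positivity), finrank_euclideanSpace_fin] at hvol1
  have hne : ENNReal.ofReal ((m * k) ^ d) ≠ 0 := by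
    rw [Ne, ENNReal.ofReal_eq_zero, not_le]; positivity
  have h7 := (ENNReal.mul_lt_mul_iff_right hne ENNReal.ofReal_ne_top).mpr hvol
  rw [← mul_assoc, ← ENNReal.ofReal_mul (by positivity), ← mul_pow] at h7
  have h8 : m * k * (1 / (L * k)) = m / L := by field_simp
  rw [h8] at h7
  exact absurd (lt_of_le_of_lt hvol1 h7) (lt_irrefl _)

lemma barrier_fderiv {d : ℕ} (p : EuclideanSpace ℝ (Fin d)) (α κ : ℝ)
    (y : EuclideanSpace ℝ (Fin d)) :
    HasFDerivAt (fun y => Real.exp (-α * ‖y - p‖ ^ 2) - κ)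
      ((-2 * α * Real.exp (-α * ‖y - p‖ ^ 2)) • innerSL ℝ (y - p)) y := by
  have h1 : HasFDerivAt (fun y => ‖y - p‖ ^ 2) (2 • innerSL ℝ (y - p)) y := by
    simpa using ((hasFDerivAt_id y).sub_const p).norm_sq
  have h2 := ((h1.const_mul (-α)).exp).sub_const κ
  refine h2.congr_fderiv ?_
  refine ContinuousLinearMap.ext fun z => ?_
  simp only [two_smul, FunLike.coe_smul, Pi.smul_apply, smul_eq_mul, FunLike.coe_add, Pi.add_apply]
  ring

lemma barrier_sdv {d : ℕ} (p : EuclideanSpace ℝ (Fin d)) (α κ : ℝ)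
    (x : EuclideanSpace ℝ (Fin d)) (i j : Fin d) :
    sdv (fun y => Real.exp (-α * ‖y - p‖ ^ 2) - κ) x i j =
      Real.exp (-α * ‖x - p‖ ^ 2) * (4 * α ^ 2 * ((x - p) i * (x - p) j)
        - 2 * α * (if i = j then 1 else 0)) := by
  unfold sdv
  have e : (fun y => fderiv ℝ (fun y => Real.exp (-α * ‖y - p‖ ^ 2) - κ) y
      (EuclideanSpace.single j 1)) = fun y => (-2 * α * (Real.exp (-α * ‖y - p‖ ^ 2) - 0)) *
        (inner ℝ (EuclideanSpace.single j 1) (y - p)) := by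
    funext y
    rw [(barrier_fderiv p α κ y).fderiv]
    rw [real_inner_comm]
    simp only [FunLike.coe_smul, Pi.smul_apply, smul_eq_mul, innerSL_apply_apply, sub_zero]
  rw [e]
  have h1 := ((barrier_fderiv p α 0 x).const_mul (-2 * α))
  have h2 : HasFDerivAt (fun y => (inner ℝ (EuclideanSpace.single j 1) (y - p) : ℝ))
      (innerSL ℝ (EuclideanSpace.single j 1)) x := by
    have := (innerSL ℝ (EuclideanSpace.single j (1 : ℝ))).hasFDerivAt.comp x
      ((hasFDerivAt_id x).sub_const p)
    rw [ContinuousLinearMap.comp_id] at this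
    exact this
  rw [(h1.fun_mul h2).fderiv]
  by_cases hij : i = j
  · subst hij
    simp [EuclideanSpace.inner_single_left, EuclideanSpace.inner_single_right]
    ring
  · have hji : j ≠ i := fun h => hij h.symm
    simp [EuclideanSpace.inner_single_left, EuclideanSpace.inner_single_right, hij, hji]
    ring

lemma barrier_gradient {d : ℕ} (p : EuclideanSpace ℝ (Fin d)) (α κ : ℝ)
    (x : EuclideanSpace ℝ (Fin d)) :
    gradient (fun y => Real.exp (-α * ‖y - p‖ ^ 2) - κ) x =
      (-2 * α * Real.exp (-α * ‖x - p‖ ^ 2)) • (x - p) := by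
  unfold gradient
  rw [(barrier_fderiv p α κ x).fderiv]
  refine (LinearIsometryEquiv.symm_apply_eq _).mpr ?_
  ext z
  simp

lemma trace_le {d : ℕ} {A : Matrix (Fin d) (Fin d) ℝ} {C : ℝ}
    (hA : ∀ z, quadForm A z ≤ C * ‖z‖ ^ 2) : ∑ i, A i i ≤ d * C := by
  have : ∀ i, A i i ≤ C := fun i => by
    have := hA (EuclideanSpace.single i 1)
    simpa [quadForm, Pi.single_apply] using this
  calc _ ≤ ∑ i : Fin d, C := Finset.sum_le_sum fun i _ => this i
    _ = d * C := by simp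

lemma spread {d : ℕ} {D : Set (EuclideanSpace ℝ (Fin d))} (hDo : IsOpen D)
    {C M c : ℝ} (hC : 1 ≤ C) (hM : 0 ≤ M) (hc : 0 ≤ c)
    {a : EuclideanSpace ℝ (Fin d) → Matrix (Fin d) (Fin d) ℝ}
    (ha : ∀ x ∈ D, ∀ z : EuclideanSpace ℝ (Fin d),
      C⁻¹ * ‖z‖ ^ 2 ≤ quadForm (a x) z ∧ quadForm (a x) z ≤ C * ‖z‖ ^ 2)
    {w : EuclideanSpace ℝ (Fin d) → ℝ} (hw : ContDiffOn ℝ 2 w D)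
    (hs : SubSol D a M c w) (hle : ∀ x ∈ D, w x ≤ 0)
    {p : EuclideanSpace ℝ (Fin d)} {R : ℝ} (hR : 0 < R) (hball : closedBall p R ⊆ D)
    (hp : w p < 0) : ∀ z ∈ ball p R, w z < 0 := by
  by_contra! hcon
  obtain ⟨z, hz, hz0⟩ := hcon
  have hC0 : 0 < C := by linarith
  have hpD : p ∈ D := hball (mem_closedBall_self hR.le)
  -- a small ball where `w` is negative
  obtain ⟨ρ, m, hρ, hm0, hm⟩ : ∃ ρ m : ℝ, 0 < ρ ∧ 0 < m ∧
      ∀ y ∈ closedBall p ρ, w y ≤ -m := by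
    have hcont := (hw.continuousOn.continuousAt (hDo.mem_nhds hpD))
    have hev : ∀ᶠ y in 𝓝 p, w y < w p / 2 := hcont.eventually_lt_const (by linarith)
    obtain ⟨ρ, hρ, h⟩ := Metric.nhds_basis_closedBall.eventually_iff.mp hev
    exact ⟨ρ, -(w p / 2), hρ, by linarith, fun y hy => by linarith [h hy]⟩
  set N : ℝ := 2 * (d * C + M * R) + c + 1 with hN
  have hN0 : 0 < N := by positivity
  set α : ℝ := max 1 (C * N / (4 * ρ ^ 2)) with hα
  have hα1 : 1 ≤ α := le_max_left _ _
  have hα2 : N ≤ 4 * α * (C⁻¹ * ρ ^ 2) := by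
    have : C * N / (4 * ρ ^ 2) ≤ α := le_max_right _ _
    rw [div_le_iff₀ (by positivity)] at this
    have h2 : C * N ≤ C * (4 * α * (C⁻¹ * ρ ^ 2)) := by
      calc _ ≤ _ := this
        _ = _ := by field_simp
    exact le_of_mul_le_mul_left h2 hC0
  set κ : ℝ := Real.exp (-α * R ^ 2) with hκ
  have hκ0 : 0 < κ := Real.exp_pos _
  set h : EuclideanSpace ℝ (Fin d) → ℝ := fun y => Real.exp (-α * ‖y - p‖ ^ 2) - κ with hh
  have hhd : ContDiff ℝ 2 h := by
    refine ContDiff.sub ?_ contDiff_const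
    exact (contDiff_const.mul ((contDiff_id.sub contDiff_const).norm_sq ℝ)).exp
  have hhpos : ∀ y ∈ ball p R, 0 < h y := by
    intro y hy
    rw [mem_ball_iff_norm] at hy
    have : ‖y - p‖ ^ 2 < R ^ 2 := pow_lt_pow_left₀ hy (norm_nonneg _) (by norm_num)
    simp only [hh, hκ, sub_pos, Real.exp_lt_exp]
    nlinarith
  obtain ⟨y, hyK, hy⟩ := (isCompact_closedBall p R).exists_isMaxOn
    (f := fun y => w y - (-m) * h y) ⟨p, mem_closedBall_self hR.le⟩
    ((hw.continuousOn.mono hball).sub (continuousOn_const.mul hhd.continuous.continuousOn))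
  have hgy : 0 < w y - (-m) * h y := by
    have h1 := hy (ball_subset_closedBall hz)
    simp only [mem_ofPred_eq] at h1
    have := mul_pos hm0 (hhpos z hz)
    linarith
  have hyD := hball hyK
  set E : ℝ := Real.exp (-α * ‖y - p‖ ^ 2) with hE
  have hE0 : 0 < E := Real.exp_pos _
  have hhy : h y = E - κ := rfl
  have hE1 : E ≤ 1 := by
    rw [hE, Real.exp_le_one_iff]
    have : 0 ≤ α * ‖y - p‖ ^ 2 := by positivity
    linarith
  have hyρ : ρ < ‖y - p‖ := by
    by_contra! hcon
    have h1 := hm y (by rwa [mem_closedBall_iff_norm])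
    rw [hhy] at hgy
    nlinarith
  have hyR : ‖y - p‖ < R := by
    rw [mem_closedBall_iff_norm] at hyK
    refine lt_of_le_of_ne hyK fun heq => ?_
    have : h y = 0 := by rw [hhy, hE, heq, hκ, sub_self]
    rw [this] at hgy
    linarith [hle y hyD]
  have hyB : y ∈ ball p R := by rwa [mem_ball_iff_norm]
  have hloc : IsLocalMax (fun y => w y - (-m) * h y) y :=
    (hy.filter_mono (by
      rw [le_principal_iff]
      exact mem_of_superset (isOpen_ball.mem_nhds hyB) ball_subset_closedBall))
  have hwd : ContDiffAt ℝ 2 w y := hw.contDiffAt (hDo.mem_nhds hyD)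
  have hgd : ContDiffAt ℝ 2 (fun y => w y - (-m) * h y) y :=
    hwd.sub (contDiffAt_const.mul hhd.contDiffAt)
  have hg : gradient (fun y => w y - (-m) * h y) y = 0 := by
    unfold gradient
    rw [hloc.fderiv_eq_zero]; simp
  rw [gradient_sub hwd hhd.contDiffAt, barrier_gradient, sub_eq_zero] at hg
  have hgn : ‖gradient w y‖ = m * (2 * α * E * ‖y - p‖) := by
    rw [hg, norm_smul, norm_smul, Real.norm_eq_abs, Real.norm_eq_abs, abs_neg, abs_of_pos hm0]
    have : -2 * α * Real.exp (-α * ‖y - p‖ ^ 2) = -(2 * α * E) := by rw [hE]; ring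
    rw [this, abs_neg, abs_of_pos (by positivity)]
  have hq := quad_nonpos hgd hloc
  have htr := trace_ineq (A := a y) (c := 0) (fun z => by
    have := (ha y hyD z).1
    have : 0 ≤ C⁻¹ * ‖z‖ ^ 2 := by positivity
    linarith) (fun i j => sdv_symm hgd i j) hq
  simp only [Matrix.of_apply, zero_mul] at htr
  have e1 : (∑ i, ∑ j, a y i j * sdv (fun y => w y - (-m) * h y) y i j) =
      (∑ i, ∑ j, a y i j * sdv w y i j) + m * (∑ i, ∑ j, a y i j * sdv h y i j) := by
    simp only [sdv_sub hwd hhd.contDiffAt, Finset.mul_sum, ← Finset.sum_add_distrib]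
    refine Finset.sum_congr rfl fun i _ => Finset.sum_congr rfl fun j _ => ?_
    ring
  have e2 : (∑ i, ∑ j, a y i j * sdv h y i j) =
      E * (4 * α ^ 2 * quadForm (a y) (y - p) - 2 * α * ∑ i, a y i i) := by
    have : ∀ i, a y i i = ∑ j, a y i j * (if i = j then 1 else 0) := fun i => by simp
    simp only [this]
    simp only [hh, barrier_sdv, quadForm, Finset.mul_sum, ← Finset.sum_sub_distrib]
    refine Finset.sum_congr rfl fun i _ => Finset.sum_congr rfl fun j _ => ?_
    rw [hE]; ring
  have htrA := trace_le fun z => (ha y hyD z).2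
  have hqA := (ha y hyD (y - p)).1
  have h0 := hs y hyD
  rw [hgn, abs_of_nonpos (hle y hyD)] at h0
  have hcw : c * -w y ≤ c * (m * E) := by
    refine mul_le_mul_of_nonneg_left ?_ hc
    rw [hhy] at hgy
    nlinarith
  have hqA' : C⁻¹ * ρ ^ 2 ≤ quadForm (a y) (y - p) := by
    refine le_trans ?_ hqA
    gcongr
  have hfin : 0 < 4 * α ^ 2 * quadForm (a y) (y - p) - 2 * α * (∑ i, a y i i)
      - M * (2 * α * ‖y - p‖) - c := by
    have i1 : α * N ≤ 4 * α ^ 2 * quadForm (a y) (y - p) := by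
      calc α * N ≤ α * (4 * α * (C⁻¹ * ρ ^ 2)) := by gcongr
        _ = 4 * α ^ 2 * (C⁻¹ * ρ ^ 2) := by ring
        _ ≤ _ := by gcongr
    have i2 : 2 * α * (∑ i, a y i i) ≤ 2 * α * (d * C) := by gcongr
    have i3 : M * (2 * α * ‖y - p‖) ≤ M * (2 * α * R) := by gcongr
    have i4 : α * N = 2 * α * (d * C) + M * (2 * α * R) + α * (c + 1) := by rw [hN]; ring
    have i5 : 1 * (c + 1) ≤ α * (c + 1) := by gcongr
    linarith
  have hfin2 := mul_pos (mul_pos hm0 hE0) hfin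
  rw [e1, e2] at htr
  nlinarith

lemma smp {d : ℕ} {D : Set (EuclideanSpace ℝ (Fin d))} (hDo : IsOpen D)
    (hDc : IsConnected D) {C M c : ℝ} (hC : 1 ≤ C) (hM : 0 ≤ M) (hc : 0 ≤ c)
    {a : EuclideanSpace ℝ (Fin d) → Matrix (Fin d) (Fin d) ℝ}
    (ha : ∀ x ∈ D, ∀ z : EuclideanSpace ℝ (Fin d),
      C⁻¹ * ‖z‖ ^ 2 ≤ quadForm (a x) z ∧ quadForm (a x) z ≤ C * ‖z‖ ^ 2)
    {w : EuclideanSpace ℝ (Fin d) → ℝ} (hw : ContDiffOn ℝ 2 w D)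
    (hs : SubSol D a M c w) (hle : ∀ x ∈ D, w x ≤ 0)
    {y : EuclideanSpace ℝ (Fin d)} (hy : y ∈ D) (hy0 : w y = 0) :
    ∀ x ∈ D, w x = 0 := by
  by_contra! hcon
  obtain ⟨x, hx, hx0⟩ := hcon
  have hu : IsOpen (D ∩ {x | w x < 0}) :=
    hw.continuousOn.isOpen_inter_preimage hDo isOpen_Iio
  have hv : IsOpen (D ∩ {x | w x = 0}) := by
    rw [Metric.isOpen_iff]
    rintro z ⟨hz, hz0⟩
    obtain ⟨R, hR, hRD⟩ := Metric.isOpen_iff.mp hDo z hz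
    refine ⟨R / 2, by positivity, fun p hp => ?_⟩
    have hpD : p ∈ D := hRD (ball_subset_ball (by linarith) hp)
    refine ⟨hpD, ?_⟩
    by_contra hne
    have hlt : w p < 0 := lt_of_le_of_ne (hle p hpD) hne
    have hsub : closedBall p (R / 2) ⊆ D := fun q hq => hRD (by
      rw [mem_ball] at hp ⊢
      rw [mem_closedBall] at hq
      linarith [dist_triangle q p z])
    have := spread hDo hC hM hc ha hw hs hle (by positivity : 0 < R / 2) hsub hlt z
      (by rwa [mem_ball, dist_comm])
    rw [mem_ofPred_eq] at hz0
    linarith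
  obtain ⟨q, -, hq1, hq2⟩ := hDc.isPreconnected _ _ hu hv
    (fun q hq => (lt_or_eq_of_le (hle q hq)).imp (fun h => ⟨hq, h⟩) (fun h => ⟨hq, h⟩))
    ⟨x, hx, hx, lt_of_le_of_ne (hle x hx) hx0⟩ ⟨y, hy, hy, hy0⟩
  have h1 : w q < 0 := hq1.2
  have h2 : w q = 0 := hq2.2
  linarith

end CSB

/-- **Theorem A.4: comparison/simplicity theorem on bounded domains,
classical-solution rendering.** If `Gψ ≤ λψ` in `D` with `ψ > 0` in `D`, `Gφ ≥ λφ` in `D`,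
`φ ≤ 0` on `∂D`, and `φ(x₀) > 0` for some `x₀ ∈ D`, then `ψ = t·φ` for some `t > 0`. -/
theorem comparison_simplicity_bounded_domain
    {d : ℕ} (hd : 1 ≤ d) {U : Type*} [MetricSpace U] [CompactSpace U] [Nonempty U]
    (D : Set (EuclideanSpace ℝ (Fin d)))
    (hD_ne : D.Nonempty) (hD_open : IsOpen D) (hD_conn : IsConnected D)
    (hD_bdd : Bornology.IsBounded D)
    (a : EuclideanSpace ℝ (Fin d) → Matrix (Fin d) (Fin d) ℝ)
    (b : EuclideanSpace ℝ (Fin d) → U → EuclideanSpace ℝ (Fin d))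
    (r : EuclideanSpace ℝ (Fin d) → U → ℝ)
    -- `a` measurable, symmetric, uniformly elliptic and bounded
    (ha_meas : ∀ i j, Measurable fun x => a x i j)
    (ha_symm : ∀ x ∈ D, (a x).IsSymm)
    (ha_ell : ∃ C : ℝ, 1 ≤ C ∧ ∀ x ∈ D, ∀ z : EuclideanSpace ℝ (Fin d),
      C⁻¹ * ‖z‖ ^ 2 ≤ quadForm (a x) z ∧ quadForm (a x) z ≤ C * ‖z‖ ^ 2)
    -- `b`, `r` bounded, measurable in `x` and continuous in `u`
    (hb_meas : ∀ u, Measurable fun x => b x u) (hb_cont : ∀ x, Continuous fun u => b x u)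
    (hr_meas : ∀ u, Measurable fun x => r x u) (hr_cont : ∀ x, Continuous fun u => r x u)
    (hb_bdd : ∃ M : ℝ, ∀ x ∈ D, ∀ u, ‖b x u‖ ≤ M)
    (hr_bdd : ∃ r₀ : ℝ, ∀ x ∈ D, ∀ u, |r x u| ≤ r₀)
    (lam : ℝ) (ψ φ : EuclideanSpace ℝ (Fin d) → ℝ)
    (hψ_reg : ContDiffOn ℝ 2 ψ D) (hψ_cont : ContinuousOn ψ (closure D))
    (hφ_reg : ContDiffOn ℝ 2 φ D) (hφ_cont : ContinuousOn φ (closure D))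
    (hψ_sub : ∀ x ∈ D, Gop a b r ψ x ≤ lam * ψ x)
    (hψ_pos : ∀ x ∈ D, 0 < ψ x)
    (hφ_sup : ∀ x ∈ D, lam * φ x ≤ Gop a b r φ x)
    (hφ_bd : ∀ x ∈ frontier D, φ x ≤ 0)
    (x₀ : EuclideanSpace ℝ (Fin d)) (hx₀ : x₀ ∈ D) (hφx₀ : 0 < φ x₀) :
    ∃ t : ℝ, 0 < t ∧ ∀ x ∈ closure D, ψ x = t * φ x := by
  obtain ⟨C, hC, ha⟩ := ha_ell
  obtain ⟨M, hb⟩ := hb_bdd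
  obtain ⟨r₀, hr⟩ := hr_bdd
  obtain ⟨u₀⟩ := ‹Nonempty U›
  have : Nonempty U := ⟨u₀⟩
  have hM : 0 ≤ M := (norm_nonneg _).trans (hb x₀ hx₀ u₀)
  have hr0 : 0 ≤ r₀ := (abs_nonneg _).trans (hr x₀ hx₀ u₀)
  have hc : 0 ≤ r₀ + |lam| := by positivity
  have hclb := hD_bdd.closure
  set L : ℝ := Metric.diam (closure D) + 1 with hL
  have hL0 : 0 < L := by have := Metric.diam_nonneg (s := closure D); linarith
  have hdist : ∀ x ∈ closure D, ∀ y ∈ closure D, dist x y ≤ L := fun x hx y hy => by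
    have := Metric.dist_le_diam_of_mem hclb hx hy
    linarith
  set c := r₀ + |lam| with hcdef
  set δ : ENNReal := ENNReal.ofReal ((1 / (L * (C * (M / L + c) + 1))) ^ d)
      * volume (ball (0 : EuclideanSpace ℝ (Fin d)) 1) with hδ
  have hδ0 : δ ≠ 0 := by
    refine mul_ne_zero ?_ (measure_ball_pos _ _ one_pos).ne'
    rw [Ne, ENNReal.ofReal_eq_zero, not_le]; positivity
  obtain ⟨K₀, hK₀D, hK₀, hK₀v⟩ := hD_open.measurableSet.exists_isCompact_sdiff_lt (μ := volume)
    hD_bdd.measure_lt_top.ne hδ0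
  set K := insert x₀ K₀ with hKdef
  have hK : IsCompact K := hK₀.insert x₀
  have hKD : K ⊆ D := Set.insert_subset hx₀ hK₀D
  have hKv : volume (D \ K) < δ :=
    lt_of_le_of_lt (measure_mono (sdiff_subset_sdiff_right (subset_insert _ _))) hK₀v
  obtain ⟨y, hyK, hy⟩ := hK.exists_isMaxOn (f := fun x => φ x / ψ x) ⟨x₀, mem_insert _ _⟩
    ((hφ_reg.continuousOn.mono hKD).div (hψ_reg.continuousOn.mono hKD)
      fun x hx => (hψ_pos x (hKD hx)).ne')
  set t := φ y / ψ y with ht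
  have ht0 : 0 < t := lt_of_lt_of_le (div_pos hφx₀ (hψ_pos x₀ hx₀)) (hy (mem_insert _ _))
  have hψ_nn : ∀ x ∈ closure D, 0 ≤ ψ x := fun x hx => by
    have hmem := hψ_cont.image_closure (mem_image_of_mem ψ hx)
    have : closure (ψ '' D) ⊆ Set.Ici 0 :=
      closure_minimal (by rintro _ ⟨z, hz, rfl⟩; exact (hψ_pos z hz).le) isClosed_Ici
    exact this hmem
  have hs := CSB.subSol_of_G hD_open hb hr lam hψ_reg hφ_reg hψ_sub hφ_sup ht0.le
  have hwd : ContDiffOn ℝ 2 (fun y => φ y - t * ψ y) D :=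
    hφ_reg.sub (contDiffOn_const.mul hψ_reg)
  have hwc : ContinuousOn (fun y => φ y - t * ψ y) (closure D) :=
    hφ_cont.sub (continuousOn_const.mul hψ_cont)
  have hleK : ∀ x ∈ K, φ x - t * ψ x ≤ 0 := fun x hx => by
    have h1 : φ x / ψ x ≤ t := hy hx
    rw [div_le_iff₀ (hψ_pos x (hKD hx))] at h1
    linarith
  have hΩo : IsOpen (D \ K) := hD_open.sdiff hK.isClosed
  have hleΩ := CSB.abp hD_open hD_bdd hL0 hdist hC hM hc (fun x hx z => (ha x hx z).1)
    hwd hwc hs hΩo sdiff_subset (fun x hx => by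
      rw [hΩo.frontier_eq] at hx
      have hxc : x ∈ closure D := closure_mono sdiff_subset hx.1
      by_cases hxD : x ∈ D
      · have hxK : x ∈ K := by
          by_contra hn
          exact hx.2 ⟨hxD, hn⟩
        exact hleK x hxK
      · have h1 := hφ_bd x (by rw [hD_open.frontier_eq]; exact ⟨hxc, hxD⟩)
        have h2 := mul_nonneg ht0.le (hψ_nn x hxc)
        linarith) hKv
  have hle : ∀ x ∈ D, φ x - t * ψ x ≤ 0 := fun x hx => by
    by_cases hxK : x ∈ K
    · exact hleK x hxK
    · exact hleΩ x ⟨hx, hxK⟩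
  have hy0 : φ y - t * ψ y = 0 := by
    rw [ht, div_mul_cancel₀ _ (hψ_pos y (hKD hyK)).ne', sub_self]
  have hzero := CSB.smp hD_open hD_conn hC hM hc ha hwd hs hle (hKD hyK) hy0
  refine ⟨t⁻¹, inv_pos.mpr ht0, ?_⟩
  have hEq : Set.EqOn ψ (fun x => t⁻¹ * φ x) D := fun x hx => by
    have h1 := hzero x hx
    have h2 : φ x = t * ψ x := by linarith
    simp only [h2]
    rw [inv_mul_cancel_left₀ ht0.ne']
  exact hEq.of_subset_closure hψ_cont (continuousOn_const.mul hφ_cont) subset_closure le_rfl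
end
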